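/- Let N ≥ 2 and p > 1, and if N ≥ 3 assume additionally p + 1 < 2N/(N-2). Then there exists α* > 0 such that for every α > α*, S^rad_{α,p} > S_{α,p} (strict inequality between the radial ground-state level and the ground-state level). -/

import Mathlib

open MeasureTheory Metric Set Filter

noncomputable section

abbrev E (N : ℕ) := EuclideanSpace ℝ (Fin N)

/-- The Laplacian: sum of pure second partial derivatives. -/
def lap {N : ℕ} (u : E N → ℝ) (x : E N) : ℝ :=
  ∑ i, fderiv ℝ (fun y => fderiv ℝ u y (EuclideanSpace.single i 1)) x (EuclideanSpace.single i 1)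
/-- The admissible class 𝒞: C¹ functions on the closed unit ball, vanishing on the
boundary sphere, not identically zero. -/
def memC {N : ℕ} (u : E N → ℝ) : Prop :=
  ContDiffOn ℝ 1 u (closedBall 0 1) ∧
  (∀ x : E N, ‖x‖ = 1 → u x = 0) ∧
  ∃ x ∈ closedBall (0 : E N) 1, u x ≠ 0

/-- The Rayleigh quotient R_{α,p}. -/
def ray {N : ℕ} (α p : ℝ) (u : E N → ℝ) : ℝ :=
  (∫ x in ball (0 : E N) 1, ‖gradient u x‖ ^ 2) /
    (∫ x in ball (0 : E N) 1, ‖x‖ ^ α * |u x| ^ (p + 1)) ^ (2 / (p + 1))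

/-- The ground-state level S_{α,p}. -/
def Sval (N : ℕ) (α p : ℝ) : ℝ := sInf {c | ∃ u : E N → ℝ, memC u ∧ ray α p u = c}

/-- A function is radial if its value depends only on the norm. -/
def radial {N : ℕ} (u : E N → ℝ) : Prop := ∀ x y : E N, ‖x‖ = ‖y‖ → u x = u y

/-- The radial ground-state level S^rad_{α,p}. -/
def SradVal (N : ℕ) (α p : ℝ) : ℝ :=
  sInf {c | ∃ u : E N → ℝ, memC u ∧ radial u ∧ ray α p u = c}

/-!
A radial function `u = g ‖·‖` vanishing on the unit sphere satisfies, by the Cauchy–Schwarz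
inequality along a radius, `r ^ (N - 1) * g r ^ 2 ≤ (1 - r) * A`, where `A` is the integral of
`s ^ (N - 1) * g' s ^ 2`, i.e. its Dirichlet energy divided by the area of the sphere. For large `α`
the weight `r ^ α` only sees the region `1 - r ≲ 1 / α`, where this makes `g` small; so the radial
level is at least of order `α ^ (1 + 2 / (p + 1))`. A fixed bump shrunk to radius `1 / α` and centred
at distance `1 / α` from the sphere lives where `‖x‖ ^ α` is bounded below, hence scaling alone shows
that the unrestricted level is at most of order `α ^ (2 - N + N * (2 / (p + 1)))`. The exponents
differ by `(N - 1) * (p - 1) / (p + 1) > 0`.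
-/

/-! ### Functions of one variable -/

section OneVariable

lemma sq_integral_le_measureReal_mul_integral_sq {X : Type*} [MeasurableSpace X] {μ : Measure X}
    [IsFiniteMeasure μ] {f : X → ℝ} (hf : MemLp f 2 μ) :
    (∫ x, f x ∂μ) ^ 2 ≤ μ.real univ * ∫ x, f x ^ 2 ∂μ := by
  rcases eq_zero_or_neZero μ with rfl | _
  · simp
  have hm : 0 < μ.real univ := measureReal_univ_pos
  have jensen := even_two.convexOn_pow.map_average_le (continuous_pow 2).continuousOn isClosed_univ
    (ae_of_all _ fun x => mem_univ (f x)) (hf.integrable one_le_two) hf.integrable_sq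
  simp only [average_eq, smul_eq_mul] at jensen
  calc (∫ x, f x ∂μ) ^ 2
      = μ.real univ ^ 2 * ((μ.real univ)⁻¹ * ∫ x, f x ∂μ) ^ 2 := by field_simp
    _ ≤ μ.real univ ^ 2 * ((μ.real univ)⁻¹ * ∫ x, f x ^ 2 ∂μ) := by gcongr
    _ = μ.real univ * ∫ x, f x ^ 2 ∂μ := by field_simp

lemma rpow_le_exp_neg_mul_one_sub {r β : ℝ} (hr : 0 ≤ r) (hβ : 0 ≤ β) :
    r ^ β ≤ Real.exp (-(β * (1 - r))) := by
  have hexp : r ≤ Real.exp (r - 1) := by linarith [Real.add_one_le_exp (r - 1)]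
  calc r ^ β ≤ Real.exp (r - 1) ^ β := Real.rpow_le_rpow hr hexp hβ
    _ = Real.exp (-(β * (1 - r))) := by rw [← Real.exp_mul]; congr 1; ring

lemma integrableOn_rpow_mul_exp_neg_mul_Ioi {q β : ℝ} (hq : -1 < q) (hβ : 0 < β) :
    IntegrableOn (fun s => s ^ q * Real.exp (-(β * s))) (Ioi 0) := by
  simpa using integrableOn_rpow_mul_exp_neg_mul_rpow hq one_pos hβ

lemma integral_one_sub_rpow_mul_exp_le {q β : ℝ} (hq : -1 < q) (hβ : 0 < β) :
    ∫ r in (0 : ℝ)..1, (1 - r) ^ q * Real.exp (-(β * (1 - r))) ≤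
      β⁻¹ ^ (q + 1) * Real.Gamma (q + 1) := by
  have hgamma := Real.integral_rpow_mul_exp_neg_mul_Ioi (a := q + 1) (r := β) (by linarith) hβ
  rw [add_sub_cancel_right, one_div] at hgamma
  rw [← hgamma, intervalIntegral.integral_comp_sub_left (fun s => s ^ q * Real.exp (-(β * s))) 1,
    sub_self, sub_zero, intervalIntegral.integral_of_le zero_le_one]
  refine setIntegral_mono_set (integrableOn_rpow_mul_exp_neg_mul_Ioi hq hβ) ?_
    Ioc_subset_Ioi_self.eventuallyLE
  filter_upwards [ae_restrict_mem measurableSet_Ioi] with s (hs : 0 < s)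
  exact (by positivity : 0 ≤ s ^ q * Real.exp (-(β * s)))

lemma intervalIntegrable_one_sub_rpow_mul_exp {q : ℝ} (hq : 0 ≤ q) (β : ℝ) :
    IntervalIntegrable (fun r => (1 - r) ^ q * Real.exp (-(β * (1 - r)))) volume 0 1 :=
  (((continuous_const.sub continuous_id).rpow_const fun _ => Or.inr hq).mul
    (by fun_prop)).intervalIntegrable 0 1

lemma eqOn_deriv_derivWithin_Icc (g : ℝ → ℝ) (a b : ℝ) :
    EqOn (deriv g) (derivWithin g (Icc a b)) (Ioo a b) :=
  fun _ hx => (derivWithin_of_mem_nhds (Icc_mem_nhds hx.1 hx.2)).symm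

variable {g : ℝ → ℝ} {a b : ℝ}

lemma memLp_two_deriv_of_contDiffOn_Icc (hg : ContDiffOn ℝ 1 g (Icc a b)) :
    MemLp (deriv g) 2 (volume.restrict (Ioc a b)) := by
  rcases le_or_gt b a with hab | hab
  · simp [Ioc_eq_empty hab.not_gt]
  rw [← restrict_Ioo_eq_restrict_Ioc]
  have hcont := hg.continuousOn_derivWithin (uniqueDiffOn_Icc hab) le_rfl
  have hcont_mem : MemLp (derivWithin g (Icc a b)) 2 (volume.restrict (Icc a b)) :=
    (memLp_two_iff_integrable_sq (hcont.aestronglyMeasurable measurableSet_Icc)).2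
      (hcont.pow 2).integrableOn_Icc
  refine (memLp_congr_ae ?_).1
    (hcont_mem.mono_measure (Measure.restrict_mono_set _ Ioo_subset_Icc_self))
  filter_upwards [ae_restrict_mem measurableSet_Ioo] with x hx
  exact (eqOn_deriv_derivWithin_Icc g a b hx).symm

lemma sq_sub_le_mul_integral_deriv_sq (hg : ContDiffOn ℝ 1 g (Icc a b)) (hab : a ≤ b) :
    (g b - g a) ^ 2 ≤ (b - a) * ∫ s in a..b, deriv g s ^ 2 := by
  have cauchy_schwarz :=
    sq_integral_le_measureReal_mul_integral_sq (memLp_two_deriv_of_contDiffOn_Icc hg)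
  rw [← intervalIntegral.integral_deriv_of_contDiffOn_Icc hg hab,
    intervalIntegral.integral_of_le hab, intervalIntegral.integral_of_le hab]
  simpa [hab] using cauchy_schwarz

lemma intervalIntegrable_pow_mul_deriv_sq (d : ℕ) (hg : ContDiffOn ℝ 1 g (Icc a b)) (hab : a ≤ b) :
    IntervalIntegrable (fun s => s ^ d * deriv g s ^ 2) volume a b :=
  ((intervalIntegrable_iff_integrableOn_Ioc_of_le hab).2
    (memLp_two_deriv_of_contDiffOn_Icc hg).integrable_sq).continuousOn_mul
    (continuous_pow d).continuousOn

lemma pow_mul_sq_le_mul_integral_pow_mul_deriv_sq (d : ℕ) {R r : ℝ}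
    (hg : ContDiffOn ℝ 1 g (Icc 0 R)) (hgR : g R = 0) (hr : r ∈ Icc 0 R) :
    r ^ d * g r ^ 2 ≤ (R - r) * ∫ s in (0 : ℝ)..R, s ^ d * deriv g s ^ 2 := by
  obtain ⟨hr0, hrR⟩ := hr
  have hg' : ContDiffOn ℝ 1 g (Icc r R) := hg.mono (Icc_subset_Icc_left hr0)
  have weighted : r ^ d * ∫ s in r..R, deriv g s ^ 2 ≤ ∫ s in r..R, s ^ d * deriv g s ^ 2 := by
    rw [← intervalIntegral.integral_const_mul]
    refine intervalIntegral.integral_mono_on hrR ?_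
      (intervalIntegrable_pow_mul_deriv_sq d hg' hrR) fun s hs => by gcongr; exact hs.1
    simpa using (intervalIntegrable_pow_mul_deriv_sq 0 hg' hrR).const_mul (r ^ d)
  have enlarge :
      ∫ s in r..R, s ^ d * deriv g s ^ 2 ≤ ∫ s in (0 : ℝ)..R, s ^ d * deriv g s ^ 2 := by
    refine intervalIntegral.integral_mono_interval hr0 hrR le_rfl ?_
      (intervalIntegrable_pow_mul_deriv_sq d hg (hr0.trans hrR))
    filter_upwards [ae_restrict_mem measurableSet_Ioc] with s hs
    have := hs.1.le
    exact (by positivity : 0 ≤ s ^ d * deriv g s ^ 2)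
  calc r ^ d * g r ^ 2 = r ^ d * (g R - g r) ^ 2 := by rw [hgR, zero_sub, neg_sq]
    _ ≤ r ^ d * ((R - r) * ∫ s in r..R, deriv g s ^ 2) := by
      gcongr; exact sq_sub_le_mul_integral_deriv_sq hg' hrR
    _ = (R - r) * (r ^ d * ∫ s in r..R, deriv g s ^ 2) := by ring
    _ ≤ (R - r) * ∫ s in (0 : ℝ)..R, s ^ d * deriv g s ^ 2 :=
      mul_le_mul_of_nonneg_left (weighted.trans enlarge) (sub_nonneg.2 hrR)

lemma pow_mul_rpow_mul_abs_rpow_le {d : ℕ} {q α β r x A : ℝ} (hq : 0 ≤ q) (hβ : 0 ≤ β)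
    (hαβ : β + d * q ≤ α + d) (hr0 : 0 < r) (hr1 : r ≤ 1) (hx : r ^ d * x ^ 2 ≤ (1 - r) * A)
    (hA : 0 ≤ A) :
    r ^ d * (r ^ α * |x| ^ (2 * q)) ≤ A ^ q * ((1 - r) ^ q * Real.exp (-(β * (1 - r)))) := by
  have weight : r ^ d * r ^ α ≤ r ^ β * (r ^ d) ^ q := by
    rw [← Real.rpow_natCast, ← Real.rpow_add hr0, ← Real.rpow_mul hr0.le, ← Real.rpow_add hr0]
    exact Real.rpow_le_rpow_of_exponent_ge hr0 hr1 (by linarith)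
  have power : |x| ^ (2 * q) = (x ^ 2) ^ q := by
    rw [Real.rpow_mul (abs_nonneg x), Real.rpow_two, sq_abs]
  calc r ^ d * (r ^ α * |x| ^ (2 * q)) = r ^ d * r ^ α * (x ^ 2) ^ q := by rw [power, mul_assoc]
    _ ≤ r ^ β * (r ^ d) ^ q * (x ^ 2) ^ q := by gcongr
    _ = r ^ β * (r ^ d * x ^ 2) ^ q := by rw [Real.mul_rpow (by positivity) (by positivity)]; ring
    _ ≤ Real.exp (-(β * (1 - r))) * ((1 - r) * A) ^ q := by
      gcongr; exact rpow_le_exp_neg_mul_one_sub hr0.le hβ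
    _ = A ^ q * ((1 - r) ^ q * Real.exp (-(β * (1 - r)))) := by
      rw [Real.mul_rpow (by linarith) hA]; ring

lemma integral_pow_mul_rpow_mul_abs_rpow_le {d : ℕ} {q α β : ℝ} (hq : 0 ≤ q) (hβ : 0 < β)
    (hαβ : β + d * q ≤ α + d) (hg : ContDiffOn ℝ 1 g (Icc 0 1)) (hg1 : g 1 = 0) :
    ∫ r in (0 : ℝ)..1, r ^ d * (r ^ α * |g r| ^ (2 * q)) ≤
      β⁻¹ ^ (q + 1) * Real.Gamma (q + 1) * (∫ s in (0 : ℝ)..1, s ^ d * deriv g s ^ 2) ^ q := by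
  set A := ∫ s in (0 : ℝ)..1, s ^ d * deriv g s ^ 2
  have hA : 0 ≤ A := intervalIntegral.integral_nonneg zero_le_one fun s hs =>
    mul_nonneg (pow_nonneg hs.1 d) (sq_nonneg _)
  calc ∫ r in (0 : ℝ)..1, r ^ d * (r ^ α * |g r| ^ (2 * q))
      ≤ ∫ r in (0 : ℝ)..1, A ^ q * ((1 - r) ^ q * Real.exp (-(β * (1 - r)))) := by
        simp only [intervalIntegral.integral_of_le zero_le_one]
        refine integral_mono_of_nonneg ?_
          ((intervalIntegrable_one_sub_rpow_mul_exp hq β).const_mul _).1 ?_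
        all_goals filter_upwards [ae_restrict_mem measurableSet_Ioc] with r ⟨hr0, hr1⟩
        · exact (by positivity : 0 ≤ r ^ d * (r ^ α * |g r| ^ (2 * q)))
        · exact pow_mul_rpow_mul_abs_rpow_le hq hβ.le hαβ hr0 hr1
            (pow_mul_sq_le_mul_integral_pow_mul_deriv_sq d hg hg1 ⟨hr0.le, hr1⟩) hA
    _ = A ^ q * ∫ r in (0 : ℝ)..1, (1 - r) ^ q * Real.exp (-(β * (1 - r))) :=
      intervalIntegral.integral_const_mul _ _
    _ ≤ A ^ q * (β⁻¹ ^ (q + 1) * Real.Gamma (q + 1)) := by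
      gcongr; exact integral_one_sub_rpow_mul_exp_le (by linarith) hβ
    _ = β⁻¹ ^ (q + 1) * Real.Gamma (q + 1) * A ^ q := mul_comm _ _

end OneVariable

/-! ### Gradients and radial integrals -/

section Gradient

lemma norm_gradient_eq_norm_fderiv {𝕜 F : Type*} [RCLike 𝕜] [NormedAddCommGroup F]
    [InnerProductSpace 𝕜 F] [CompleteSpace F] (f : F → 𝕜) (x : F) :
    ‖gradient f x‖ = ‖fderiv 𝕜 f x‖ := by
  rw [← toDual_gradient, LinearIsometryEquiv.norm_map]

lemma integrableOn_interior_norm_fderiv_sq {F G : Type*} [NormedAddCommGroup F] [NormedSpace ℝ F]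
    [NormedAddCommGroup G] [NormedSpace ℝ G] [MeasurableSpace F] [BorelSpace F] {μ : Measure F}
    [IsFiniteMeasureOnCompacts μ] {K : Set F} {u : F → G} (hK : IsCompact K)
    (hK' : UniqueDiffOn ℝ K) (hu : ContDiffOn ℝ 1 u K) :
    IntegrableOn (fun x => ‖fderiv ℝ u x‖ ^ 2) (interior K) μ := by
  have hcont : ContinuousOn (fun x => ‖fderivWithin ℝ u K x‖ ^ 2) K :=
    (hu.continuousOn_fderivWithin hK' le_rfl).norm.pow 2
  refine ((hcont.integrableOn_compact hK).mono_set interior_subset).congr_fun (fun x hx => ?_)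
    isOpen_interior.measurableSet
  simp only [fderivWithin_of_mem_nhds (mem_interior_iff_mem_nhds.1 hx)]

lemma abs_deriv_norm_le_norm_fderiv {F : Type*} [NormedAddCommGroup F] [NormedSpace ℝ F]
    {u : F → ℝ} {g : ℝ → ℝ} (hug : ∀ y, u y = g ‖y‖) {x : F} (hx : x ≠ 0)
    (hu : DifferentiableAt ℝ u x) : |deriv g ‖x‖| ≤ ‖fderiv ℝ u x‖ := by
  have hx' : 0 < ‖x‖ := norm_pos_iff.2 hx
  set v : F := ‖x‖⁻¹ • x
  have hv : ‖v‖ = 1 := norm_smul_inv_norm hx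
  have hxv : ‖x‖ • v = x := smul_inv_smul₀ hx'.ne' x
  have along_ray : HasDerivAt (fun t : ℝ => u (t • v)) (fderiv ℝ u x v) ‖x‖ := by
    have hline : HasDerivAt (fun t : ℝ => t • v) v ‖x‖ := by
      simpa using (hasDerivAt_id ‖x‖).smul_const v
    have hdiff : HasFDerivAt u (fderiv ℝ u x) (‖x‖ • v) := by rw [hxv]; exact hu.hasFDerivAt
    exact hdiff.comp_hasDerivAt ‖x‖ hline
  have hg : g =ᶠ[nhds ‖x‖] fun t => u (t • v) := by
    filter_upwards [lt_mem_nhds hx'] with t ht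
    rw [hug, norm_smul, hv, mul_one, Real.norm_of_nonneg ht.le]
  rw [(along_ray.congr_of_eventuallyEq hg).deriv]
  simpa [hv] using (fderiv ℝ u x).le_opNorm v

lemma toSphere_real_univ_pos {F : Type*} [NormedAddCommGroup F] [NormedSpace ℝ F]
    [MeasurableSpace F] [BorelSpace F] [FiniteDimensional ℝ F] [Nontrivial F] (μ : Measure F)
    [μ.IsAddHaarMeasure] : 0 < μ.toSphere.real univ :=
  have : NeZero μ.toSphere := ⟨μ.toSphere_ne_zero⟩
  measureReal_univ_pos

lemma setIntegral_ball_fun_norm_addHaar {F : Type*} [NormedAddCommGroup F] [NormedSpace ℝ F]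
    [MeasurableSpace F] [BorelSpace F] [FiniteDimensional ℝ F] [Nontrivial F] (μ : Measure F)
    [μ.IsAddHaarMeasure] (f : ℝ → ℝ) {R : ℝ} (hR : 0 ≤ R) :
    ∫ x in ball (0 : F) R, f ‖x‖ ∂μ =
      μ.toSphere.real univ * ∫ r in (0 : ℝ)..R, r ^ (Module.finrank ℝ F - 1) * f r := by
  have hball : (ball (0 : F) R).indicator (fun x => f ‖x‖) =
      fun x => (Iio R).indicator f ‖x‖ := by ext x; simp [indicator]
  have hweight : (fun r => r ^ (Module.finrank ℝ F - 1) • (Iio R).indicator f r) =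
      (Iio R).indicator fun r => r ^ (Module.finrank ℝ F - 1) * f r := by
    ext r; simp [indicator]
  rw [← integral_indicator measurableSet_ball, hball, integral_fun_norm_addHaar, hweight,
    setIntegral_indicator measurableSet_Iio, Ioi_inter_Iio, ← integral_Ioc_eq_integral_Ioo,
    ← intervalIntegral.integral_of_le hR, μ.toSphere_real_apply_univ, nsmul_eq_mul, smul_eq_mul,
    mul_assoc]

end Gradient

/-! ### The radial level -/

section Rayleigh

/-- The Dirichlet energy of `u` on the unit ball, i.e. the numerator of `ray`. -/
def dirichletEnergy {N : ℕ} (u : E N → ℝ) : ℝ := ∫ x in ball (0 : E N) 1, ‖gradient u x‖ ^ 2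

/-- The weighted integral `∫ |x|^α |u|^(p+1)` on the unit ball, whose power `2 / (p + 1)` is the
denominator of `ray`. -/
def weightedMass {N : ℕ} (α p : ℝ) (u : E N → ℝ) : ℝ :=
  ∫ x in ball (0 : E N) 1, ‖x‖ ^ α * |u x| ^ (p + 1)

variable {N : ℕ} {α p : ℝ} {u : E N → ℝ}

lemma ray_eq_dirichletEnergy_div : ray α p u =
    dirichletEnergy u / weightedMass α p u ^ (2 / (p + 1)) := rfl

lemma dirichletEnergy_nonneg : 0 ≤ dirichletEnergy u := integral_nonneg fun _ => by positivity

lemma weightedMass_nonneg : 0 ≤ weightedMass α p u := integral_nonneg fun _ => by positivity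

lemma ray_nonneg : 0 ≤ ray α p u :=
  div_nonneg dirichletEnergy_nonneg (Real.rpow_nonneg weightedMass_nonneg _)

lemma Sval_le_ray (hu : memC u) : Sval N α p ≤ ray α p u :=
  csInf_le ⟨0, by rintro _ ⟨v, -, rfl⟩; exact ray_nonneg⟩ ⟨u, hu, rfl⟩

lemma integrableOn_ball_norm_gradient_sq (hu : ContDiffOn ℝ 1 u (closedBall 0 1)) :
    IntegrableOn (fun x => ‖gradient u x‖ ^ 2) (ball (0 : E N) 1) := by
  have hinterior : interior (closedBall (0 : E N) 1) = ball 0 1 :=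
    interior_closedBall 0 one_ne_zero
  simp only [norm_gradient_eq_norm_fderiv, ← hinterior]
  refine integrableOn_interior_norm_fderiv_sq (isCompact_closedBall 0 1) ?_ hu
  exact uniqueDiffOn_convex (convex_closedBall 0 1) (by simp [hinterior])

lemma continuousOn_norm_rpow_mul_abs_rpow (hα : 0 ≤ α) (hp : -1 ≤ p) {s : Set (E N)}
    (hu : ContinuousOn u s) : ContinuousOn (fun x => ‖x‖ ^ α * |u x| ^ (p + 1)) s :=
  (continuousOn_id.norm.rpow_const fun _ _ => Or.inr hα).mul
    (hu.abs.rpow_const fun _ _ => Or.inr (by linarith))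

lemma integrableOn_ball_norm_rpow_mul_abs_rpow (hα : 0 ≤ α) (hp : -1 ≤ p)
    (hu : ContinuousOn u (closedBall 0 1)) :
    IntegrableOn (fun x => ‖x‖ ^ α * |u x| ^ (p + 1)) (ball (0 : E N) 1) :=
  ((continuousOn_norm_rpow_mul_abs_rpow hα hp hu).integrableOn_compact
    (isCompact_closedBall 0 1)).mono_set ball_subset_closedBall

lemma memC.exists_mem_ball (hu : memC u) : ∃ x ∈ ball (0 : E N) 1, u x ≠ 0 := by
  obtain ⟨-, hboundary, x, hx, hne⟩ := hu
  refine ⟨x, ?_, hne⟩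
  rw [mem_closedBall_zero_iff] at hx
  exact mem_ball_zero_iff.2 (hx.lt_of_ne fun h => hne (hboundary x h))

lemma memC_one_sub_norm_sq : memC fun x : E N => 1 - ‖x‖ ^ 2 :=
  ⟨(contDiff_const.sub (contDiff_norm_sq ℝ)).contDiffOn, fun x hx => by simp [hx],
    0, by simp, by simp⟩

variable [NeZero N]

lemma weightedMass_pos (hα : 0 ≤ α) (hp : -1 ≤ p) (hu : memC u) : 0 < weightedMass α p u := by
  obtain ⟨x₀, hx₀, hne⟩ := hu.exists_mem_ball
  rw [weightedMass, setIntegral_pos_iff_support_of_nonneg_ae (ae_of_all _ fun x => by positivity)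
    (integrableOn_ball_norm_rpow_mul_abs_rpow hα hp hu.1.continuousOn)]
  have hopen : IsOpen (ball (0 : E N) 1 ∩ u ⁻¹' {0}ᶜ) :=
    (hu.1.continuousOn.mono ball_subset_closedBall).isOpen_inter_preimage isOpen_ball
      isOpen_compl_singleton
  calc 0 < volume (ball (0 : E N) 1 ∩ u ⁻¹' {0}ᶜ) := hopen.measure_pos _ ⟨x₀, hx₀, hne⟩
    _ = volume ((ball (0 : E N) 1 ∩ u ⁻¹' {0}ᶜ) \ {0}) :=
      (measure_sdiff_null (measure_singleton 0)).symm
    _ ≤ _ := measure_mono ?_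
  rintro x ⟨⟨hx_ball, hux : u x ≠ 0⟩, hx : x ≠ 0⟩
  have : 0 < ‖x‖ ^ α * |u x| ^ (p + 1) := by positivity
  exact ⟨this.ne', hx_ball⟩

lemma radial.exists_profile (hrad : radial u) (hu : ContDiffOn ℝ 1 u (closedBall 0 1))
    (hboundary : ∀ x : E N, ‖x‖ = 1 → u x = 0) :
    ∃ g : ℝ → ℝ, ContDiffOn ℝ 1 g (Icc 0 1) ∧ g 1 = 0 ∧ ∀ x, u x = g ‖x‖ := by
  set e : E N := EuclideanSpace.single 0 1
  have he : ‖e‖ = 1 := by simp [e]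
  refine ⟨fun r => u (r • e), hu.comp (by fun_prop) fun r hr => ?_, hboundary _ (by simp [he]),
    fun x => hrad _ _ (by simp [norm_smul, he])⟩
  simpa [norm_smul, he, abs_of_nonneg hr.1] using hr.2

lemma toSphere_mul_integral_deriv_sq_le_dirichletEnergy
    (hu : ContDiffOn ℝ 1 u (closedBall 0 1)) {g : ℝ → ℝ} (hug : ∀ x, u x = g ‖x‖) :
    (volume : Measure (E N)).toSphere.real univ *
      ∫ r in (0 : ℝ)..1, r ^ (N - 1) * deriv g r ^ 2 ≤ dirichletEnergy u := by
  have polar := setIntegral_ball_fun_norm_addHaar (volume : Measure (E N))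
    (fun r => deriv g r ^ 2) zero_le_one
  rw [finrank_euclideanSpace_fin] at polar
  rw [← polar]
  refine integral_mono_of_nonneg (ae_of_all _ fun x => sq_nonneg _)
    (integrableOn_ball_norm_gradient_sq hu) ?_
  filter_upwards [ae_restrict_mem measurableSet_ball, ae_restrict_of_ae (Measure.ae_ne volume 0)]
    with x hx hx0
  have hdiff : DifferentiableAt ℝ u x :=
    (hu.differentiableOn one_ne_zero).differentiableAt (closedBall_mem_nhds_of_mem hx)
  rw [norm_gradient_eq_norm_fderiv, ← sq_abs (deriv g ‖x‖)]
  gcongr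
  exact abs_deriv_norm_le_norm_fderiv hug hx0 hdiff

lemma weightedMass_le_dirichletEnergy_rpow {β : ℝ} (hp : -1 < p) (hβ : 0 < β)
    (hαβ : β + (N - 1 : ℕ) * ((p + 1) / 2) ≤ α + (N - 1 : ℕ))
    (hu : ContDiffOn ℝ 1 u (closedBall 0 1)) {g : ℝ → ℝ} (hg : ContDiffOn ℝ 1 g (Icc 0 1))
    (hg1 : g 1 = 0) (hug : ∀ x, u x = g ‖x‖) :
    weightedMass α p u ≤ (volume : Measure (E N)).toSphere.real univ ^ (1 - (p + 1) / 2) *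
      (β⁻¹ ^ ((p + 1) / 2 + 1) * Real.Gamma ((p + 1) / 2 + 1)) *
        dirichletEnergy u ^ ((p + 1) / 2) := by
  set q := (p + 1) / 2 with hq
  have hq0 : 0 < q := by linarith
  set ω := (volume : Measure (E N)).toSphere.real univ
  have hω : 0 < ω := toSphere_real_univ_pos volume
  set K := β⁻¹ ^ (q + 1) * Real.Gamma (q + 1)
  have : 0 ≤ K := mul_nonneg (by positivity) (Real.Gamma_pos_of_pos (by linarith)).le
  set A := ∫ r in (0 : ℝ)..1, r ^ (N - 1) * deriv g r ^ 2
  have hA : 0 ≤ A := intervalIntegral.integral_nonneg zero_le_one fun r hr =>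
    mul_nonneg (pow_nonneg hr.1 _) (sq_nonneg _)
  have polar := setIntegral_ball_fun_norm_addHaar (volume : Measure (E N))
    (fun r => r ^ α * |g r| ^ (2 * q)) zero_le_one
  rw [finrank_euclideanSpace_fin] at polar
  calc weightedMass α p u
      = ∫ x in ball (0 : E N) 1, ‖x‖ ^ α * |g ‖x‖| ^ (2 * q) := by
        simp only [weightedMass, hug, hq, mul_div_cancel₀ (p + 1) (two_ne_zero' ℝ)]
    _ = ω * ∫ r in (0 : ℝ)..1, r ^ (N - 1) * (r ^ α * |g r| ^ (2 * q)) := polar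
    _ ≤ ω * (K * A ^ q) := by
      gcongr; exact integral_pow_mul_rpow_mul_abs_rpow_le hq0.le hβ hαβ hg hg1
    _ = ω ^ (1 - q) * K * (ω * A) ^ q := by
      rw [Real.mul_rpow hω.le hA, Real.rpow_sub hω, Real.rpow_one]; field_simp
    _ ≤ ω ^ (1 - q) * K * dirichletEnergy u ^ q := by
      gcongr; exact toSphere_mul_integral_deriv_sq_le_dirichletEnergy hu hug

lemma rpow_neg_inv_le_div_rpow_inv {D I K q : ℝ} (hD : 0 < D) (hI : 0 ≤ I) (hK : 0 < K)
    (hq : 0 < q) (h : D ≤ K * I ^ q) : K ^ (-q⁻¹) ≤ I / D ^ q⁻¹ := by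
  have root : D ^ q⁻¹ ≤ K ^ q⁻¹ * I := by
    calc D ^ q⁻¹ ≤ (K * I ^ q) ^ q⁻¹ := by gcongr
      _ = K ^ q⁻¹ * I := by
        rw [Real.mul_rpow hK.le (by positivity), Real.rpow_rpow_inv hI hq.ne']
  rw [le_div_iff₀ (by positivity), Real.rpow_neg hK.le, inv_mul_le_iff₀ (by positivity)]
  exact root

lemma exists_mul_rpow_le_SradVal (N : ℕ) [NeZero N] (hp : -1 < p) :
    ∃ c > 0, ∀ᶠ α : ℝ in atTop, c * α ^ (1 + 2 / (p + 1)) ≤ SradVal N α p := by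
  set q := (p + 1) / 2 with hq
  have hq0 : 0 < q := by linarith
  have hq_inv : 2 / (p + 1) = q⁻¹ := by rw [hq, inv_div]
  set ω := (volume : Measure (E N)).toSphere.real univ
  have hω : 0 < ω := toSphere_real_univ_pos volume
  have : 0 < Real.Gamma (q + 1) := Real.Gamma_pos_of_pos (by linarith)
  set c := ω ^ (1 - q) * (2 ^ (q + 1) * Real.Gamma (q + 1))
  have hc : 0 < c := by positivity
  refine ⟨c ^ (-q⁻¹), by positivity, ?_⟩
  filter_upwards [eventually_gt_atTop 0, eventually_ge_atTop (2 * (N - 1 : ℕ) * (q - 1))]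
    with α hα hαN
  refine le_csInf ⟨_, _, memC_one_sub_norm_sq, fun x y hxy => by simp only [hxy], rfl⟩ ?_
  rintro _ ⟨u, hu, hrad, rfl⟩
  rw [ray_eq_dirichletEnergy_div, hq_inv]
  obtain ⟨g, hg, hg1, hug⟩ := hrad.exists_profile hu.1 hu.2.1
  have mass_le : weightedMass α p u ≤ c * α ^ (-(q + 1)) * dirichletEnergy u ^ q := by
    have rate : α / 2 + (N - 1 : ℕ) * q ≤ α + (N - 1 : ℕ) := by linarith
    refine (weightedMass_le_dirichletEnergy_rpow hp (half_pos hα) rate hu.1 hg hg1 hug).trans_eq ?_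
    rw [← hq, inv_div, Real.div_rpow zero_le_two hα.le, Real.rpow_neg hα.le]
    ring
  calc c ^ (-q⁻¹) * α ^ (1 + q⁻¹) = (c * α ^ (-(q + 1))) ^ (-q⁻¹) := by
        rw [Real.mul_rpow hc.le (by positivity), ← Real.rpow_mul hα.le]
        congr 2
        field_simp
    _ ≤ dirichletEnergy u / weightedMass α p u ^ q⁻¹ :=
      rpow_neg_inv_le_div_rpow_inv (weightedMass_pos hα.le hp.le hu) dirichletEnergy_nonneg
        (by positivity) hq0 mass_le

end Rayleigh

/-! ### The unrestricted level -/

section Rescale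

variable {V : Type*} [NormedAddCommGroup V] [NormedSpace ℝ V]

/-- The function `φ` shrunk by the factor `t` and centred at `a`: if `φ` lives in the unit ball at
the origin, then `rescale φ a t` lives in the ball of radius `1 / t` at `a`. -/
def rescale (φ : V → ℝ) (a : V) (t : ℝ) : V → ℝ := fun x => φ (t • (x - a))

variable {φ : V → ℝ} {a : V} {t : ℝ}

lemma contDiff_rescale {n : WithTop ℕ∞} (hφ : ContDiff ℝ n φ) : ContDiff ℝ n (rescale φ a t) :=
  hφ.comp (by fun_prop)

lemma fderiv_rescale (x : V) : fderiv ℝ (rescale φ a t) x = t • fderiv ℝ φ (t • (x - a)) := by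
  unfold rescale
  rw [fderiv_comp_sub (f := fun y => φ (t • y)), fderiv_comp_smul]

lemma norm_sub_lt_of_rescale_ne_zero (hφ : ∀ x, 1 ≤ ‖x‖ → φ x = 0) (ht : 0 < t) {x : V}
    (hx : rescale φ a t x ≠ 0) : ‖x - a‖ < 1 / t := by
  have h : ‖t • (x - a)‖ < 1 := not_le.1 fun h => hx (hφ _ h)
  rw [norm_smul, Real.norm_of_nonneg ht.le] at h
  rwa [lt_div_iff₀' ht]

lemma norm_mem_Ioo_of_rescale_ne_zero (hφ : ∀ x, 1 ≤ ‖x‖ → φ x = 0) (ht : 0 < t)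
    (ha : ‖a‖ = 1 - 1 / t) {x : V} (hx : rescale φ a t x ≠ 0) : ‖x‖ ∈ Ioo (1 - 2 / t) 1 := by
  have hdist := norm_sub_lt_of_rescale_ne_zero hφ ht hx
  have hupper := norm_sub_norm_le x a
  have hlower := norm_sub_norm_le a x
  rw [norm_sub_rev] at hlower
  have htwo : 2 / t = 1 / t + 1 / t := by ring
  constructor <;> linarith

variable [MeasurableSpace V] [BorelSpace V] [FiniteDimensional ℝ V] {μ : Measure V}
  [μ.IsAddHaarMeasure]

lemma integral_rescale (φ : V → ℝ) (a : V) (ht : 0 ≤ t) :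
    ∫ x, rescale φ a t x ∂μ = (t ^ Module.finrank ℝ V)⁻¹ * ∫ x, φ x ∂μ := by
  unfold rescale
  rw [integral_sub_right_eq_self (fun y => φ (t • y)) a,
    Measure.integral_comp_smul_of_nonneg _ _ _ (hR := ht), smul_eq_mul]

lemma integrable_rescale (hφ : Integrable φ μ) (a : V) (ht : t ≠ 0) :
    Integrable (rescale φ a t) μ :=
  (hφ.comp_smul ht).comp_sub_right a

end Rescale

section Concentration

variable {N : ℕ} {α p : ℝ} {φ : E N → ℝ} {a : E N}

lemma dirichletEnergy_rescale_le {t : ℝ} (hφ : ContDiff ℝ 1 φ) (hφ' : HasCompactSupport φ)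
    (ht : 0 < t) :
    dirichletEnergy (rescale φ a t) ≤ t ^ 2 * ((t ^ N)⁻¹ * ∫ x, ‖fderiv ℝ φ x‖ ^ 2) := by
  have hcont : Continuous fun x => ‖fderiv ℝ φ x‖ ^ 2 :=
    (hφ.continuous_fderiv one_ne_zero).norm.pow 2
  have hsupp : HasCompactSupport fun x => ‖fderiv ℝ φ x‖ ^ 2 :=
    (hφ'.fderiv ℝ).comp_left (g := fun L => ‖L‖ ^ 2) (by simp)
  have hgrad (x : E N) : ‖gradient (rescale φ a t) x‖ ^ 2 =
      t ^ 2 * rescale (fun y => ‖fderiv ℝ φ y‖ ^ 2) a t x := by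
    rw [norm_gradient_eq_norm_fderiv, fderiv_rescale, norm_smul, mul_pow, Real.norm_eq_abs, sq_abs,
      rescale]
  have scaling := integral_rescale (μ := volume) (fun x => ‖fderiv ℝ φ x‖ ^ 2) a ht.le
  rw [finrank_euclideanSpace_fin] at scaling
  rw [← scaling, ← integral_const_mul, dirichletEnergy]
  simp only [hgrad]
  refine setIntegral_le_integral ((integrable_rescale
    (hcont.integrable_of_hasCompactSupport hsupp) a ht.ne').const_mul _) (ae_of_all _ fun x => ?_)
  exact mul_nonneg (sq_nonneg t) (sq_nonneg ‖fderiv ℝ φ (t • (x - a))‖)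

lemma le_weightedMass_rescale (hφ : Continuous φ) (hφ' : ∀ x, 1 ≤ ‖x‖ → φ x = 0) (hα : 2 ≤ α)
    (hp : -1 < p) (ha : ‖a‖ = 1 - 1 / α) :
    (α ^ N)⁻¹ * ((1 - 2 / α) ^ α * ∫ x, |φ x| ^ (p + 1)) ≤ weightedMass α p (rescale φ a α) := by
  have hα0 : 0 < α := by linarith
  have hannulus : 0 ≤ 1 - 2 / α := sub_nonneg.2 ((div_le_one hα0).2 hα)
  set u := rescale φ a α
  have hu : Continuous u := hφ.comp (by fun_prop)
  have hball (x : E N) (hx : x ∉ ball (0 : E N) 1) : u x = 0 := by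
    by_contra h
    exact hx (mem_ball_zero_iff.2 (norm_mem_Ioo_of_rescale_ne_zero hφ' hα0 ha h).2)
  have hu_int := integrableOn_ball_norm_rpow_mul_abs_rpow hα0.le hp.le
    (hu.continuousOn (s := closedBall 0 1))
  have scaling := integral_rescale (μ := volume) (fun x => |φ x| ^ (p + 1)) a hα0.le
  rw [finrank_euclideanSpace_fin] at scaling
  calc (α ^ N)⁻¹ * ((1 - 2 / α) ^ α * ∫ x, |φ x| ^ (p + 1))
      = ∫ x, (1 - 2 / α) ^ α * |u x| ^ (p + 1) := by
        rw [mul_left_comm, ← scaling, ← integral_const_mul]; rfl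
    _ = ∫ x in ball (0 : E N) 1, (1 - 2 / α) ^ α * |u x| ^ (p + 1) := by
      refine (setIntegral_eq_integral_of_forall_compl_eq_zero fun x hx => ?_).symm
      rw [hball x hx, abs_zero, Real.zero_rpow (by linarith), mul_zero]
    _ ≤ weightedMass α p u := by
      refine integral_mono_of_nonneg (ae_of_all _ fun x => by positivity) hu_int
        (ae_of_all _ fun x => ?_)
      rcases eq_or_ne (u x) 0 with hx | hx
      · simp [hx, Real.zero_rpow (by linarith : p + 1 ≠ 0)]
      · have hlower := (norm_mem_Ioo_of_rescale_ne_zero hφ' hα0 ha hx).1.le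
        exact mul_le_mul_of_nonneg_right (Real.rpow_le_rpow hannulus hlower hα0.le) (by positivity)

lemma one_div_sixteen_le_one_sub_two_div_rpow {α : ℝ} (hα : 4 ≤ α) :
    1 / 16 ≤ (1 - 2 / α) ^ α := by
  have hα0 : 0 < α := by linarith
  have hbase : 2 / α ≤ 1 / 2 := by rw [div_le_iff₀ hα0]; linarith
  have bernoulli : 1 / 2 ≤ (1 - 2 / α) ^ (α / 4) := by
    have h := one_add_mul_self_le_rpow_one_add (s := -(2 / α)) (p := α / 4) (by linarith)
      (by linarith)
    rw [← sub_eq_add_neg] at h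
    refine le_trans (le_of_eq ?_) h
    field_simp
    norm_num
  calc (1 / 16 : ℝ) = (1 / 2) ^ 4 := by norm_num
    _ ≤ ((1 - 2 / α) ^ (α / 4)) ^ 4 := by gcongr
    _ = (1 - 2 / α) ^ α := by
      rw [← Real.rpow_mul_natCast (by linarith)]
      congr 1
      push_cast
      ring

lemma memC_rescale (hφ : ContDiff ℝ 1 φ) (hφ' : ∀ x, 1 ≤ ‖x‖ → φ x = 0) (hφ0 : φ 0 ≠ 0)
    (hα : 1 ≤ α) (ha : ‖a‖ = 1 - 1 / α) : memC (rescale φ a α) := by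
  have hα0 : 0 < α := by linarith
  have hinv : 0 < 1 / α := by positivity
  refine ⟨(contDiff_rescale hφ).contDiffOn, fun x hx => ?_, a, ?_, by simpa [rescale] using hφ0⟩
  · by_contra h
    exact (norm_mem_Ioo_of_rescale_ne_zero hφ' hα0 ha h).2.ne hx
  · rw [mem_closedBall_zero_iff]; linarith

lemma ray_rescale_le (hφ : ContDiff ℝ 1 φ) (hφ' : ∀ x, 1 ≤ ‖x‖ → φ x = 0)
    (hφp : 0 < ∫ x, |φ x| ^ (p + 1)) (hα : 4 ≤ α) (hp : -1 < p) (ha : ‖a‖ = 1 - 1 / α) :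
    ray α p (rescale φ a α) ≤
      (∫ x, ‖fderiv ℝ φ x‖ ^ 2) / (1 / 16 * ∫ x, |φ x| ^ (p + 1)) ^ (2 / (p + 1)) *
        α ^ (2 - (N : ℝ) + N * (2 / (p + 1))) := by
  have hα0 : 0 < α := by linarith
  have hφc : HasCompactSupport φ := HasCompactSupport.intro (isCompact_closedBall 0 1) fun x hx =>
    hφ' x (not_le.1 (mt mem_closedBall_zero_iff.2 hx)).le
  set G := ∫ x, ‖fderiv ℝ φ x‖ ^ 2
  set P := ∫ x, |φ x| ^ (p + 1)
  set s := 2 / (p + 1)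
  have hs : 0 < s := div_pos two_pos (by linarith)
  have mass_ge : (α ^ N)⁻¹ * (1 / 16 * P) ≤ weightedMass α p (rescale φ a α) := by
    refine le_trans ?_ (le_weightedMass_rescale hφ.continuous hφ' (by linarith) hp ha)
    gcongr
    exact one_div_sixteen_le_one_sub_two_div_rpow hα
  calc ray α p (rescale φ a α)
      ≤ α ^ 2 * ((α ^ N)⁻¹ * G) / ((α ^ N)⁻¹ * (1 / 16 * P)) ^ s := by
        rw [ray_eq_dirichletEnergy_div]
        gcongr
        exact dirichletEnergy_rescale_le hφ hφc hα0
    _ = G / (1 / 16 * P) ^ s * α ^ (2 - (N : ℝ) + N * s) := by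
      rw [Real.mul_rpow (by positivity) (by positivity), Real.inv_rpow (by positivity),
        Real.rpow_add hα0, Real.rpow_sub hα0, Real.rpow_mul hα0.le, Real.rpow_natCast,
        Real.rpow_two]
      field_simp

lemma exists_Sval_le_mul_rpow (N : ℕ) [NeZero N] (hp : -1 < p) :
    ∃ C, ∀ᶠ α : ℝ in atTop, Sval N α p ≤ C * α ^ (2 - (N : ℝ) + N * (2 / (p + 1))) := by
  let φ : ContDiffBump (0 : E N) := ⟨1 / 2, 1, by norm_num, by norm_num⟩
  have hφ : ContDiff ℝ 1 φ := φ.contDiff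
  have hφ' (x : E N) (hx : 1 ≤ ‖x‖) : φ x = 0 := φ.zero_of_le_dist (by simpa using hx)
  have hφ0 : φ 0 ≠ 0 := by simp [φ.one_of_mem_closedBall (mem_closedBall_self φ.rIn_pos.le)]
  have hφp : 0 < ∫ x, |φ x| ^ (p + 1) := by
    have hp1 : 0 < p + 1 := by linarith
    refine (φ.continuous.abs.rpow_const fun _ =>
      Or.inr hp1.le).integral_pos_of_hasCompactSupport_nonneg_nonzero
      (φ.hasCompactSupport.comp_left (g := fun t => |t| ^ (p + 1)) ?_) (fun x => by positivity)
      (x := 0) (by positivity)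
    simp [hp1.ne']
  refine ⟨(∫ x, ‖fderiv ℝ φ x‖ ^ 2) / (1 / 16 * ∫ x, |φ x| ^ (p + 1)) ^ (2 / (p + 1)), ?_⟩
  filter_upwards [eventually_ge_atTop 4] with α hα
  have hinv : 1 / α ≤ 1 := by rw [div_le_one (by linarith)]; linarith
  have ha : ‖(EuclideanSpace.single 0 (1 - 1 / α) : E N)‖ = 1 - 1 / α :=
    (PiLp.norm_single ..).trans (Real.norm_of_nonneg (sub_nonneg.2 hinv))
  exact (Sval_le_ray (memC_rescale hφ hφ' hφ0 (by linarith) ha)).trans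
    (ray_rescale_le hφ hφ' hφp hα hp ha)

end Concentration

lemma eventually_mul_rpow_lt_mul_rpow (C : ℝ) {c a b : ℝ} (hc : 0 < c) (hab : a < b) :
    ∀ᶠ x : ℝ in atTop, C * x ^ a < c * x ^ b := by
  filter_upwards [(tendsto_rpow_atTop (sub_pos.2 hab)).eventually_gt_atTop (C / c),
    eventually_gt_atTop 0] with x hx hx0
  calc C * x ^ a < c * x ^ (b - a) * x ^ a := by gcongr; rwa [← div_lt_iff₀' hc]
    _ = c * x ^ b := by rw [mul_assoc, ← Real.rpow_add hx0, sub_add_cancel]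

lemma concentration_exponent_lt_radial_exponent {N : ℕ} (hN : 2 ≤ N) {p : ℝ} (hp : 1 < p) :
    2 - (N : ℝ) + N * (2 / (p + 1)) < 1 + 2 / (p + 1) := by
  have hN1 : (1 : ℝ) < N := by exact_mod_cast hN
  have hs : 2 / (p + 1) < 1 := by rw [div_lt_one (by linarith)]; linarith
  nlinarith

theorem stmt7_general {N : ℕ} (hN : 2 ≤ N) (p : ℝ) (hp : 1 < p) :
    ∃ αstar : ℝ, 0 < αstar ∧ ∀ α : ℝ, αstar < α → Sval N α p < SradVal N α p := by
  have : NeZero N := ⟨by omega⟩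
  obtain ⟨c, hc, radial_level⟩ := exists_mul_rpow_le_SradVal N (by linarith : -1 < p)
  obtain ⟨C, ground_level⟩ := exists_Sval_le_mul_rpow N (by linarith : -1 < p)
  have gap := eventually_mul_rpow_lt_mul_rpow C hc (concentration_exponent_lt_radial_exponent hN hp)
  have break_symmetry : ∀ᶠ α in atTop, Sval N α p < SradVal N α p := by
    filter_upwards [radial_level, ground_level, gap] with α hrad hground hgap
    exact hground.trans_lt (hgap.trans_le hrad)
  obtain ⟨αstar, hαstar⟩ := eventually_atTop.1 break_symmetry
  exact ⟨max 1 αstar, lt_max_of_lt_left one_pos, fun α hα =>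
    hαstar α ((le_max_right _ _).trans hα.le)⟩

/-- Smets–Su–Willem key estimate: for α large, the radial ground-state level is
strictly above the ground-state level. -/
theorem stmt7 {N : ℕ} (hN : 2 ≤ N) (p : ℝ) (hp : 1 < p)
    (hsub : 3 ≤ N → p + 1 < 2 * (N : ℝ) / ((N : ℝ) - 2)) :
    ∃ αstar : ℝ, 0 < αstar ∧ ∀ α : ℝ, αstar < α →
      Sval N α p < SradVal N α p :=
  stmt7_general hN p hp
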